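/- Let (R,B) be an EIC problem with problem graph G=(V,E), and let 𝒞' ⊆ 𝒞 be a cover of V by neighborhood-cliques. Then there exists a neighborhood partition {Ñ_1,…,Ñ_n} with Σ_{i=1}^n χ(Ḡ|_{Ñ_i}) ≤ |𝒞'|. -/

import Mathlib

open Matrix BigOperators

namespace EIC

variable {n m : ℕ}

/-- The vertex set of the problem graph of the EIC problem `(R, B)`:
one vertex for each requirement pair `(u, a)` with `R u a = 1`. -/
abbrev Vtx (R : Matrix (Fin n) (Fin m) (ZMod 2)) : Type :=
  {p : Fin n × Fin m // R p.1 p.2 = 1}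

/-- `(R, B)` have disjoint supports: no position has both `B = 1` and `R = 1`. -/
def DisjointSupports (R B : Matrix (Fin n) (Fin m) (ZMod 2)) : Prop :=
  ∀ u a, ¬(B u a = 1 ∧ R u a = 1)

/-- The standard basis vector `e_a ∈ F_2^m`. -/
def e (m : ℕ) (a : Fin m) : Fin m → ZMod 2 := Pi.single a 1

/-- `β` (with rows indexed by `ι`) is a centralized linear broadcast solution to `(R, B)`:
for every requirement pair `(u, a)` there is `α` with `e_a = α · [β ; diag(B_u)]`. -/
def IsCentralizedSolution (R B : Matrix (Fin n) (Fin m) (ZMod 2))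
    {ι : Type} [Fintype ι] (β : Matrix ι (Fin m) (ZMod 2)) : Prop :=
  ∀ u a, R u a = 1 →
    ∃ α : ι ⊕ Fin m → ZMod 2,
      e m a = α ᵥ* Matrix.fromRows β (Matrix.diagonal (B u))

/-- `(C)_{(R,B)}`: the minimum length of a centralized linear broadcast solution. -/
noncomputable def Copt (R B : Matrix (Fin n) (Fin m) (ZMod 2)) : ℕ :=
  sInf {h | ∃ β : Matrix (Fin h) (Fin m) (ZMod 2), IsCentralizedSolution R B β}

/-- The vertical concatenation of the matrices `β u`, `u ∈ [n]`. -/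
def vconcat {h : Fin n → ℕ} (β : ∀ u : Fin n, Matrix (Fin (h u)) (Fin m) (ZMod 2)) :
    Matrix ((ℓ : Fin n) × Fin (h ℓ)) (Fin m) (ZMod 2) :=
  Matrix.of fun p => β p.1 p.2

/-- `β⁽¹⁾, …, β⁽ⁿ⁾` is a (decentralized) linear broadcast solution to `(R, B)`. -/
def IsBroadcastSolution (R B : Matrix (Fin n) (Fin m) (ZMod 2))
    {h : Fin n → ℕ} (β : ∀ u : Fin n, Matrix (Fin (h u)) (Fin m) (ZMod 2)) : Prop :=
  (∀ u a, B u a = 0 → ∀ i, β u i a = 0) ∧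
  ∀ u a, R u a = 1 →
    ∃ α : ((ℓ : Fin n) × Fin (h ℓ)) ⊕ Fin m → ZMod 2,
      e m a = α ᵥ* Matrix.fromRows (vconcat β) (Matrix.diagonal (B u))

/-- `(D)_{(R,B)}`: the minimum length of a decentralized linear broadcast solution. -/
noncomputable def Dopt (R B : Matrix (Fin n) (Fin m) (ZMod 2)) : ℕ :=
  sInf {s | ∃ (h : Fin n → ℕ) (β : ∀ u : Fin n, Matrix (Fin (h u)) (Fin m) (ZMod 2)),
    IsBroadcastSolution R B β ∧ ∑ u, h u = s}

/-- A task-based solution: a linear broadcast solution where every requirement pair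
`(u, a)` can be decoded from the broadcast of a single responsible sender `ℓ`. -/
def IsTaskBased (R B : Matrix (Fin n) (Fin m) (ZMod 2))
    {h : Fin n → ℕ} (β : ∀ u : Fin n, Matrix (Fin (h u)) (Fin m) (ZMod 2)) : Prop :=
  IsBroadcastSolution R B β ∧
  ∀ u a, R u a = 1 → ∃ ℓ : Fin n, ∃ α : Fin (h ℓ) ⊕ Fin m → ZMod 2,
    e m a = α ᵥ* Matrix.fromRows (β ℓ) (Matrix.diagonal (B u))

/-- `(T)_{(R,B)}`: the minimum length of a task-based solution. -/
noncomputable def Topt (R B : Matrix (Fin n) (Fin m) (ZMod 2)) : ℕ :=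
  sInf {s | ∃ (h : Fin n → ℕ) (β : ∀ u : Fin n, Matrix (Fin (h u)) (Fin m) (ZMod 2)),
    IsTaskBased R B β ∧ ∑ u, h u = s}

/-- The edge relation of the problem graph: for distinct requirement pairs `(u,a)`, `(w,b)`,
there is an edge from `v_{(u,a)}` to `v_{(w,b)}` iff `B u b = 1` or `a = b`. -/
def probEdge (R B : Matrix (Fin n) (Fin m) (ZMod 2)) (v w : Vtx R) : Prop :=
  v ≠ w ∧ (B v.1.1 w.1.2 = 1 ∨ v.1.2 = w.1.2)

/-- A matrix `A` fits a directed graph with edge relation `E`. -/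
def Fits {V : Type} (E : V → V → Prop) (A : Matrix V V (ZMod 2)) : Prop :=
  (∀ k, A k k = 1) ∧ ∀ k l, k ≠ l → ¬ E k l → A k l = 0

/-- `minrk₂`: the minimum `F₂`-rank of a matrix fitting the graph. -/
noncomputable def minrk {V : Type} [Fintype V] (E : V → V → Prop) : ℕ :=
  sInf {r | ∃ A : Matrix V V (ZMod 2), Fits E A ∧ A.rank = r}

/-- `rminrk₂`: the minimum `F₂`-rank of a matrix in `𝒜` fitting the graph. -/
noncomputable def rminrk {V : Type} [Fintype V] (E : V → V → Prop)
    (𝒜 : Set (Matrix V V (ZMod 2))) : ℕ :=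
  sInf {r | ∃ A ∈ 𝒜, Fits E A ∧ A.rank = r}

/-- The column repetition function `φ_{(R,B)}`: the column of `φ(A)` indexed by
`v_{(u,a)}` is the `a`-th column of `A`. -/
def phi (R : Matrix (Fin n) (Fin m) (ZMod 2))
    (A : Matrix (Vtx R) (Fin m) (ZMod 2)) : Matrix (Vtx R) (Vtx R) (ZMod 2) :=
  Matrix.of fun k v => A k v.1.2

/-- The sender neighborhood `N_u = {v_{(w,b)} ∈ V : B u b = 1}`. -/
def senderNbhd (R B : Matrix (Fin n) (Fin m) (ZMod 2)) (u : Fin n) : Set (Vtx R) :=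
  {v | B u v.1.2 = 1}

/-- A neighborhood partition `{Ñ_1, …, Ñ_n}`. -/
def IsNbhdPartition (R B : Matrix (Fin n) (Fin m) (ZMod 2))
    (N : Fin n → Set (Vtx R)) : Prop :=
  (∀ i, N i ⊆ senderNbhd R B i) ∧
  (∀ i j, i ≠ j → Disjoint (N i) (N j)) ∧
  (⋃ i, N i) = Set.univ

open Classical in
/-- `R^(i)`: the request matrix of the EIC subproblem induced by `Ñ_i`; it has ones
exactly at the requirement pairs whose vertex lies in `Ñ_i`. -/
noncomputable def Rsub (R : Matrix (Fin n) (Fin m) (ZMod 2))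
    (N : Fin n → Set (Vtx R)) (i : Fin n) : Matrix (Fin n) (Fin m) (ZMod 2) :=
  Matrix.of fun u a =>
    if hr : R u a = 1 then (if (⟨(u, a), hr⟩ : Vtx R) ∈ N i then 1 else 0) else 0

open Classical in
/-- `B^(i)`: the has-matrix of the EIC subproblem induced by `Ñ_i`; it agrees with `B`
on the columns of blocks requested in `Ñ_i` and is zero elsewhere. -/
noncomputable def Bsub (R B : Matrix (Fin n) (Fin m) (ZMod 2))
    (N : Fin n → Set (Vtx R)) (i : Fin n) : Matrix (Fin n) (Fin m) (ZMod 2) :=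
  Matrix.of fun u a => if ∃ v ∈ N i, v.1.2 = a then B u a else 0

/-- `Cl` is a clique for the edge relation `E`. -/
def IsClique {V : Type} (E : V → V → Prop) (Cl : Set V) : Prop :=
  ∀ k ∈ Cl, ∀ l ∈ Cl, k ≠ l → E k l

/-- `I` is an independent set for the edge relation `E` (no edge in either direction). -/
def IsIndep {V : Type} (E : V → V → Prop) (I : Set V) : Prop :=
  ∀ k ∈ I, ∀ l ∈ I, k ≠ l → ¬ E k l ∧ ¬ E l k

/-- `χ(Ḡ|_S)`: the minimum number of cliques of the induced subgraph `G|_S`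
needed to partition `S`. -/
noncomputable def cliqueCoverNum {V : Type} (E : V → V → Prop) (S : Set V) : ℕ :=
  sInf {t | ∃ Cl : Fin t → Set V, (∀ i, Cl i ⊆ S) ∧ (∀ i, IsClique E (Cl i)) ∧
    (∀ i j, i ≠ j → Disjoint (Cl i) (Cl j)) ∧ (⋃ i, Cl i) = S}

/-- `χ(G)`: the minimum number of independent sets of `G` needed to partition
its vertex set. -/
noncomputable def chromNum {V : Type} [Fintype V] (E : V → V → Prop) : ℕ :=
  sInf {t | ∃ I : Fin t → Set V, (∀ i, IsIndep E (I i)) ∧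
    (∀ i j, i ≠ j → Disjoint (I i) (I j)) ∧ (⋃ i, I i) = Set.univ}

/-- `ω(Ḡ|_S)`: the maximum size of an independent set of the induced subgraph `G|_S`. -/
noncomputable def indepNum {V : Type} (E : V → V → Prop) (S : Set V) : ℕ :=
  sSup {t | ∃ I ⊆ S, IsIndep E I ∧ I.ncard = t}

/-- The set of neighborhood-cliques: vertex sets of maximal cliques of the induced
subgraphs `G|_{N_i}`, over all senders `i`. -/
def nbhdCliques (R B : Matrix (Fin n) (Fin m) (ZMod 2)) : Set (Set (Vtx R)) :=
  {Cl | ∃ i : Fin n, Cl ⊆ senderNbhd R B i ∧ IsClique (probEdge R B) Cl ∧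
    ∀ Cl', Cl ⊆ Cl' → Cl' ⊆ senderNbhd R B i → IsClique (probEdge R B) Cl' → Cl' = Cl}

/-!
Assign every clique of the cover to one sender whose neighborhood contains it, and let `U i` be the
union of the cliques assigned to `i`. The sets `U i` cover the graph, and they can be shrunk to
disjoint sets `N i ⊆ U i` with the same union. The cliques assigned to `i` still cover `N i`, and
each clique is assigned, hence counted, only once.
-/

theorem exists_pairwise_disjoint_subset_iUnion_eq {ι α : Type*} (U : ι → Set α) :
    ∃ N : ι → Set α, (∀ i, N i ⊆ U i) ∧ (Pairwise fun i j ↦ Disjoint (N i) (N j)) ∧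
      ⋃ i, N i = ⋃ i, U i := by
  choose idx mem_idx using fun x : ↥(⋃ i, U i) ↦ Set.mem_iUnion.1 x.2
  refine ⟨fun i ↦ Subtype.val '' (idx ⁻¹' {i}), ?_, fun i j hij ↦ ?_, ?_⟩
  · rintro i _ ⟨x, rfl, rfl⟩
    exact mem_idx x
  · exact Set.disjoint_image_of_injective Subtype.val_injective
      (Disjoint.preimage idx (Set.disjoint_singleton.2 hij))
  · rw [← Set.image_iUnion, ← Set.preimage_iUnion, Set.iUnion_of_singleton, Set.preimage_univ,
      Set.image_univ, Subtype.range_coe]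

section CliqueCover

variable {V : Type} {E : V → V → Prop}

theorem IsClique.subset {C D : Set V} (hD : IsClique E D) (hCD : C ⊆ D) : IsClique E C :=
  fun k hk l hl ↦ hD k (hCD hk) l (hCD hl)

theorem cliqueCoverNum_le_card {κ : Type*} [Fintype κ] {C : κ → Set V} {S : Set V}
    (hC : ∀ k, IsClique E (C k)) (hS : S ⊆ ⋃ k, C k) :
    cliqueCoverNum E S ≤ Fintype.card κ := by
  obtain ⟨P, hP, hdisj, hunion⟩ := exists_pairwise_disjoint_subset_iUnion_eq fun k ↦ S ∩ C k
  have hPS : ⋃ k, P k = S := by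
    rw [hunion, ← Set.inter_iUnion, Set.inter_eq_left.2 hS]
  let σ := (Fintype.equivFin κ).symm
  exact Nat.sInf_le ⟨P ∘ σ, fun t ↦ (hP (σ t)).trans Set.inter_subset_left,
    fun t ↦ (hC (σ t)).subset ((hP (σ t)).trans Set.inter_subset_right),
    fun _ _ hst ↦ hdisj (σ.injective.ne hst), (σ.surjective.iUnion_comp P).trans hPS⟩

theorem cover_to_partition_general {ι : Type*} [Fintype ι] (nbhd : ι → Set V) {F : Set (Set V)}
    (hfin : F.Finite) (hclique : ∀ C ∈ F, IsClique E C) (hnbhd : ∀ C ∈ F, ∃ i, C ⊆ nbhd i) :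
    ∃ N : ι → Set V, (∀ i, N i ⊆ nbhd i) ∧ (Pairwise fun i j ↦ Disjoint (N i) (N j)) ∧
      ⋃ i, N i = ⋃₀ F ∧ ∑ i, cliqueCoverNum E (N i) ≤ F.ncard := by
  classical
  have := hfin.fintype
  choose sender subset_sender using fun C : F ↦ hnbhd C C.2
  let U (i : ι) : Set V := ⋃ C : {C // sender C = i}, C.1
  have hU_nbhd (i : ι) : U i ⊆ nbhd i :=
    Set.iUnion_subset fun ⟨C, hC⟩ ↦ hC ▸ subset_sender C
  have hU_union : ⋃ i, U i = ⋃₀ F := by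
    rw [Set.sUnion_eq_iUnion, ← (Equiv.sigmaFiberEquiv sender).surjective.iUnion_comp,
      Set.iUnion_sigma]
    rfl
  obtain ⟨N, hNU, hdisj, hN_union⟩ := exists_pairwise_disjoint_subset_iUnion_eq U
  refine ⟨N, fun i ↦ (hNU i).trans (hU_nbhd i), hdisj, hN_union.trans hU_union, ?_⟩
  calc ∑ i, cliqueCoverNum E (N i)
      ≤ ∑ i, Fintype.card {C // sender C = i} :=
        Finset.sum_le_sum fun i _ ↦ cliqueCoverNum_le_card (fun C ↦ hclique C.1 C.1.2) (hNU i)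
    _ = Fintype.card F := by
        rw [← Fintype.card_sigma, Fintype.card_congr (Equiv.sigmaFiberEquiv sender)]
    _ = F.ncard := by rw [Fintype.card_eq_nat_card, Nat.card_coe_set_eq]

end CliqueCover

theorem cover_to_partition {n m : ℕ}
    (R B : Matrix (Fin n) (Fin m) (ZMod 2)) (hdisj : DisjointSupports R B)
    (F : Set (Set (Vtx R))) (hF : F ⊆ nbhdCliques R B) (hcover : ⋃₀ F = Set.univ) :
    ∃ N : Fin n → Set (Vtx R), IsNbhdPartition R B N ∧
      ∑ i, cliqueCoverNum (probEdge R B) (N i) ≤ F.ncard := by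
  obtain ⟨N, hsub, hpair, hunion, hsum⟩ := cover_to_partition_general (senderNbhd R B) F.toFinite
    (fun _ hC ↦ let ⟨_, _, h, _⟩ := hF hC; h) (fun _ hC ↦ (hF hC).imp fun _ h ↦ h.1)
  exact ⟨N, ⟨hsub, fun _ _ hij ↦ hpair hij, hunion.trans hcover⟩, hsum⟩

end EIC
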